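/- arXiv:0706.1634 — 3 statements merged into one kernel-verified Lean document; each statement's English description precedes it below -/
import Mathlib

section
/- Let s ∈ ℂ and v ∈ ℂⁿ with v^*·v = 1. Then M(s)·v = 0 if and only if both L(v·v^*, s) = 0 and v^*·M(s)·v = 0. -/
open Matrix Complex
open scoped ComplexConjugate

/-- The characteristic matrix `M(s) = -s I + ∑ₖ Aₖ e^{-hₖ s}` of the DDE
`ẋ(t) = ∑ₖ Aₖ x(t - hₖ)`, with real matrices `Aₖ` regarded as complex matrices. -/
noncomputable def charM (n m : ℕ) (A : Fin (m+1) → Matrix (Fin n) (Fin n) ℝ)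
    (h : Fin (m+1) → ℝ) (s : ℂ) : Matrix (Fin n) (Fin n) ℂ :=
  (-s) • (1 : Matrix (Fin n) (Fin n) ℂ) +
    ∑ k : Fin (m+1), Complex.exp (-(h k : ℂ) * s) • ((A k).map Complex.ofReal)

/-- The operator `L(X, s) = M(s) X + X M(s)^*`. -/
noncomputable def Lop (n m : ℕ) (A : Fin (m+1) → Matrix (Fin n) (Fin n) ℝ)
    (h : Fin (m+1) → ℝ) (X : Matrix (Fin n) (Fin n) ℂ) (s : ℂ) :
    Matrix (Fin n) (Fin n) ℂ :=
  charM n m A h s * X + X * (charM n m A h s)ᴴ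

/-- Theorem (equivalence): for `v^* v = 1`, `M(s) v = 0` iff
`L(v v^*, s) = 0` and `v^* M(s) v = 0`. -/
theorem statement0 (n m : ℕ) (hn : 0 < n) (hm : 0 < m)
    (A : Fin (m+1) → Matrix (Fin n) (Fin n) ℝ) (h : Fin (m+1) → ℝ) (h0 : h 0 = 0)
    (s : ℂ) (v : Fin n → ℂ) (hv : star v ⬝ᵥ v = 1) :
    (charM n m A h s).mulVec v = 0 ↔
      (Lop n m A h (vecMulVec v (star v)) s = 0 ∧
        star v ⬝ᵥ (charM n m A h s).mulVec v = 0) := by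
  unfold Lop
  generalize charM n m A h s = M
  have key : M * vecMulVec v (star v) + vecMulVec v (star v) * Mᴴ
      = vecMulVec (M *ᵥ v) (star v) + vecMulVec v (star (M *ᵥ v)) := by
    rw [Matrix.mul_vecMulVec, Matrix.vecMulVec_mul, Matrix.star_mulVec]
  rw [key]
  generalize M *ᵥ v = w
  constructor
  · rintro rfl
    constructor
    · ext i j
      simp [vecMulVec_apply]
    · simp
  · rintro ⟨h1, h2⟩
    have h3 : star w ⬝ᵥ v = 0 := by
      have := congrArg star h2
      rwa [Matrix.star_dotProduct, star_star, star_zero] at this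
    have h4 := congrArg (fun X => X *ᵥ v) h1
    simpa [Matrix.add_mulVec, Matrix.vecMulVec_mulVec, hv, h3] using h4
end

section
/- Let a_0, …, a_m ∈ ℝ with a_m ≠ 0, let φ_1, …, φ_{m−1} ∈ ℝ with the convention φ_0 = 0, and set C := Σ_{k=0}^{m−1} a_k·cos(φ_k) and S := Σ_{k=0}^{m−1} a_k·sin(φ_k). Assume C² ≤ a_m², let ε ∈ {−1, 1}, and set ω := −S + ε·√(a_m² − C²); assume ω ≠ 0. For any integers p_1, …, p_m, define h_k := (φ_k + 2·p_k·π)/ω for k = 1, …, m−1 and h_m := (−ε·sign(a_m)·arccos(−C/a_m) + 2·p_m·π)/ω. Then −iω + Σ_{k=0}^m a_k·e^{−i·h_k·ω} = 0 (with h_0 = 0), i.e. iω is a purely imaginary eigenvalue of the scalar delay-differential equation with delays h_1, …, h_m. -/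
open Complex

lemma exp_aux (x ω θ : ℝ) (p : ℤ) (hx : x * ω = θ + 2 * (p : ℝ) * Real.pi) :
    Complex.exp (-(Complex.I * (x : ℂ) * (ω : ℂ))) =
      (Real.cos θ : ℂ) - (Real.sin θ : ℂ) * Complex.I := by
  have h1 : -(Complex.I * (x : ℂ) * (ω : ℂ)) = ((-(x * ω) : ℝ) : ℂ) * Complex.I := by
    push_cast; ring
  have h2 : θ + 2 * (p : ℝ) * Real.pi = θ + (p : ℝ) * (2 * Real.pi) := by ring
  rw [h1, Complex.exp_mul_I, ← Complex.ofReal_cos, ← Complex.ofReal_sin, Real.cos_neg,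
    Real.sin_neg, hx, h2, Real.cos_add_int_mul_two_pi, Real.sin_add_int_mul_two_pi]
  push_cast; ring

lemma sin_aux (b C : ℝ) (hb : b ≠ 0) :
    b * (Real.sign b * Real.sin (Real.arccos (-C / b))) = Real.sqrt (b ^ 2 - C ^ 2) := by
  have h1 : b * Real.sign b = |b| := by
    rcases lt_or_gt_of_ne hb with h | h
    · rw [Real.sign_of_neg h, abs_of_neg h]; ring
    · rw [Real.sign_of_pos h, abs_of_pos h]; ring
  rw [← mul_assoc, h1, Real.sin_arccos, ← Real.sqrt_sq_eq_abs, ← Real.sqrt_mul (sq_nonneg b)]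
  congr 1
  field_simp

lemma cos_aux (b C : ℝ) (hb : b ≠ 0) (h : C ^ 2 ≤ b ^ 2) :
    b * Real.cos (Real.arccos (-C / b)) = -C := by
  have h1 : |-C / b| ≤ 1 := by
    rw [abs_div, abs_neg, div_le_one (abs_pos.mpr hb)]
    exact sq_le_sq.mp h
  rw [Real.cos_arccos (abs_le.mp h1).1 (abs_le.mp h1).2]
  field_simp

/-- Corollary (scalar case): explicit parameterization of the critical delays.
With `C = ∑ₖ aₖ cos φₖ`, `S = ∑ₖ aₖ sin φₖ` (k = 0,…,m−1, φ₀ = 0),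
`C² ≤ aₘ²`, `ε = ±1`, `ω = −S + ε √(aₘ² − C²) ≠ 0`, and delays
`hₖ = (φₖ + 2 pₖ π)/ω` (k = 1,…,m−1),
`hₘ = (−ε sign(aₘ) arccos(−C/aₘ) + 2 pₘ π)/ω`,
one has `−iω + ∑_{k=0}^m aₖ e^{−i hₖ ω} = 0` (with `h₀ = 0`). -/
theorem statement8 (m : ℕ) (hm : 0 < m)
    (a : Fin (m+1) → ℝ) (ham : a (Fin.last m) ≠ 0)
    (φ : Fin m → ℝ) (hφ0 : φ ⟨0, hm⟩ = 0)
    (C S : ℝ)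
    (hC : C = ∑ k : Fin m, a k.castSucc * Real.cos (φ k))
    (hS : S = ∑ k : Fin m, a k.castSucc * Real.sin (φ k))
    (hCbound : C ^ 2 ≤ (a (Fin.last m)) ^ 2)
    (ε : ℝ) (hε : ε = 1 ∨ ε = -1)
    (ω : ℝ) (hω : ω = -S + ε * Real.sqrt ((a (Fin.last m)) ^ 2 - C ^ 2)) (hω0 : ω ≠ 0)
    (p : Fin (m+1) → ℤ) (h : Fin (m+1) → ℝ) (h0 : h 0 = 0)
    (hdel : ∀ k : Fin m, (k : ℕ) ≠ 0 →
      h k.castSucc = (φ k + 2 * (p k.castSucc : ℝ) * Real.pi) / ω)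
    (hdelm : h (Fin.last m) =
      (-(ε * Real.sign (a (Fin.last m)) * Real.arccos (-C / a (Fin.last m))) +
        2 * (p (Fin.last m) : ℝ) * Real.pi) / ω) :
    -(Complex.I * (ω : ℂ)) +
      ∑ k : Fin (m+1), (a k : ℂ) * Complex.exp (-(Complex.I * (h k : ℂ) * (ω : ℂ))) = 0 := by
  have hk : ∀ k : Fin m, Complex.exp (-(Complex.I * (h k.castSucc : ℂ) * (ω : ℂ))) =
      (Real.cos (φ k) : ℂ) - (Real.sin (φ k) : ℂ) * Complex.I := by
    intro k
    by_cases hk0 : (k : ℕ) = 0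
    · have e : k = ⟨0, hm⟩ := Fin.ext hk0
      have e2 : k.castSucc = 0 := Fin.ext hk0
      rw [e2, h0, e, hφ0]
      simp
    · apply exp_aux _ _ _ (p k.castSucc)
      rw [hdel k hk0]
      field_simp
  have hl := exp_aux (h (Fin.last m)) ω
    (-(ε * Real.sign (a (Fin.last m)) * Real.arccos (-C / a (Fin.last m)))) (p (Fin.last m))
    (by rw [hdelm]; field_simp)
  have hs := sin_aux (a (Fin.last m)) C ham
  have hc := cos_aux (a (Fin.last m)) C ham hCbound
  rw [Fin.sum_univ_castSucc, hl]
  simp only [hk]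
  generalize a (Fin.last m) = b at *
  have hb : Real.sign b = 1 ∨ Real.sign b = -1 := by
    rcases lt_or_gt_of_ne ham with h | h
    · right; exact Real.sign_of_neg h
    · left; exact Real.sign_of_pos h
  generalize Real.arccos (-C / b) = t at *
  have hc2 : b * Real.cos (-(ε * Real.sign b * t)) = -C := by
    rcases hε with e | e <;> rcases hb with f | f <;> simp [e, f, hc]
  have hs2 : b * Real.sin (-(ε * Real.sign b * t)) = -(ε * Real.sqrt (b ^ 2 - C ^ 2)) := by
    rw [← hs]
    rcases hε with e | e <;> rcases hb with f | f <;> simp [e, f]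
  have hsum : ∑ k : Fin m, (a k.castSucc : ℂ) *
      ((Real.cos (φ k) : ℂ) - (Real.sin (φ k) : ℂ) * Complex.I) = (C : ℂ) - (S : ℂ) * Complex.I := by
    rw [hC, hS, Complex.ofReal_sum, Complex.ofReal_sum, Finset.sum_mul, ← Finset.sum_sub_distrib]
    apply Finset.sum_congr rfl
    intro k _
    push_cast; ring
  rw [hsum, mul_sub, ← mul_assoc, ← Complex.ofReal_mul, ← Complex.ofReal_mul, hc2, hs2, hω]
  push_cast; ring
end

section
/- Let a_0, a_1 ∈ ℝ with a_1 ≠ 0 and a_0² < a_1². Set ω := √(a_1² − a_0²) and, for an integer p, h := (−sign(a_1)·arccos(−a_0/a_1) + 2·p·π)/ω. Then −iω + a_0 + a_1·e^{−i·h·ω} = 0; i.e. iω is a purely imaginary eigenvalue of the single-delay scalar delay-differential equation ẋ(t) = a_0·x(t) + a_1·x(t − h). -/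
open Complex

/-- Single-delay scalar case: for `a₁ ≠ 0`, `a₀² < a₁²`, `ω = √(a₁² − a₀²)` and
`h = (−sign(a₁) arccos(−a₀/a₁) + 2 p π)/ω`, `iω` is a purely imaginary eigenvalue:
`−iω + a₀ + a₁ e^{−i h ω} = 0`. -/
theorem statement9 (a0 a1 : ℝ) (ha1 : a1 ≠ 0) (ha : a0 ^ 2 < a1 ^ 2)
    (ω : ℝ) (hω : ω = Real.sqrt (a1 ^ 2 - a0 ^ 2)) (p : ℤ)
    (h : ℝ)
    (hh : h = (-(Real.sign a1 * Real.arccos (-a0 / a1)) + 2 * (p : ℝ) * Real.pi) / ω) :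
    -(Complex.I * (ω : ℂ)) + (a0 : ℂ) +
      (a1 : ℂ) * Complex.exp (-(Complex.I * (h : ℂ) * (ω : ℂ))) = 0 := by
  have hpos : 0 < a1 ^ 2 - a0 ^ 2 := by linarith
  have hωpos : 0 < ω := by rw [hω]; exact Real.sqrt_pos.mpr hpos
  have hhω : h * ω = -(Real.sign a1 * Real.arccos (-a0 / a1)) + (p : ℝ) * (2 * Real.pi) := by
    rw [hh]; field_simp
  have habs : |(-a0 / a1)| ≤ 1 := by
    rw [abs_div, abs_neg, div_le_one (abs_pos.mpr ha1)]
    exact (sq_lt_sq.mp ha).le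
  have hcosarc : Real.cos (Real.arccos (-a0 / a1)) = -a0 / a1 :=
    Real.cos_arccos (abs_le.mp habs).1 (abs_le.mp habs).2
  have hsinarc : Real.sin (Real.arccos (-a0 / a1)) = ω / |a1| := by
    rw [Real.sin_arccos, hω, ← Real.sqrt_sq_eq_abs, ← Real.sqrt_div hpos.le]
    congr 1
    field_simp
  have hcos : a1 * Real.cos (h * ω) = -a0 := by
    rw [hhω, Real.cos_add_int_mul_two_pi, Real.cos_neg]
    rcases lt_or_gt_of_ne ha1 with hn | hp
    · rw [Real.sign_of_neg hn, neg_one_mul, Real.cos_neg, hcosarc]; field_simp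
    · rw [Real.sign_of_pos hp, one_mul, hcosarc]; field_simp
  have hsin : a1 * Real.sin (h * ω) = -ω := by
    rw [hhω, Real.sin_add_int_mul_two_pi, Real.sin_neg]
    rcases lt_or_gt_of_ne ha1 with hn | hp
    · rw [Real.sign_of_neg hn, neg_one_mul, Real.sin_neg, hsinarc, abs_of_neg hn]; field_simp
    · rw [Real.sign_of_pos hp, one_mul, hsinarc, abs_of_pos hp]; field_simp
  have hexp : Complex.exp (-(Complex.I * (h : ℂ) * (ω : ℂ)))
      = (Real.cos (h * ω) : ℂ) - (Real.sin (h * ω) : ℂ) * Complex.I := by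
    have : -(Complex.I * (h : ℂ) * (ω : ℂ)) = (-((h * ω : ℝ) : ℂ)) * Complex.I := by
      push_cast; ring
    rw [this, Complex.exp_mul_I, Complex.cos_neg, Complex.sin_neg, Complex.ofReal_cos,
      Complex.ofReal_sin]
    ring
  have hc : (a1 : ℂ) * (Real.cos (h * ω) : ℂ) = -(a0 : ℂ) := by exact_mod_cast hcos
  have hs : (a1 : ℂ) * (Real.sin (h * ω) : ℂ) = -(ω : ℂ) := by exact_mod_cast hsin
  rw [hexp]
  linear_combination hc - Complex.I * hs
end
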